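/- Assume k₂ ≠ 0 and |k₁| > 1. Then for any sequences (ε_m) in (0,1] with ε_m → 0 and (φ_m) of 2π-periodic solutions of the system (S_{ε_m}), the sequence (φ_m(0)) does not converge to any point of the set ξ(ℝ×ℝ) = { (sin θ, cos θ, sin η, cos η) : θ, η ∈ ℝ }. -/

import Mathlib

open scoped Topology

/-- The saturation function: `φ(x) = -1` for `x < -1`, `φ(x) = x` for `-1 ≤ x ≤ 1`,
`φ(x) = 1` for `x > 1`. -/
noncomputable def sat (x : ℝ) : ℝ := if x < -1 then -1 else if x ≤ 1 then x else 1

/-- The right-hand side of the four-dimensional system (S_ε). -/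
noncomputable def sysF (k₁ k₂ ε t : ℝ) (x : Fin 4 → ℝ) : Fin 4 → ℝ :=
  ![x 1 - x 0 * (x 0 ^ 2 + x 1 ^ 2 - 1),
    -x 0 - x 1 * (x 0 ^ 2 + x 1 ^ 2 - 1) + ε * (Real.sin t + sat (k₁ * x 2)),
    x 3 - x 2 * (x 2 ^ 2 + x 3 ^ 2 - 1),
    -x 2 - x 3 * (x 2 ^ 2 + x 3 ^ 2 - 1) + ε * sat (k₂ * x 1)]

/-- The family of initial conditions of `2π`-periodic solutions of the unperturbed
system: `ξ(θ,η) = (sin θ, cos θ, sin η, cos η)`. -/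
noncomputable def xiPt (θ η : ℝ) : Fin 4 → ℝ :=
  ![Real.sin θ, Real.cos θ, Real.sin η, Real.cos η]

/-!
In the complex coordinates `z₁ = x₂ + i x₁`, `z₂ = x₄ + i x₃`, each half of the system is a forced
oscillator `ż = i z + (1 - |z|²) z + ε g` whose unforced limit cycle is `e^{i (t + θ)}`. As
`z ↦ |z|² z` is monotone, Grönwall's inequality makes solutions that start near the cycle converge
to it uniformly over a period. The argument of `z` relative to the cycle changes at the rate
`ε Im (g / z)`, so for periodic solutions `∫ Im (g / z) = 0`, and in the limit the forcing `G`
satisfies `∫ G(t) sin (t + θ) dt = 0`.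

Write `D(f) = ∫ f(cos t) cos t dt` over a period. The two limit equations read
`π cos θ + cos (θ - η) D(φ(k₁ ·)) = 0` and `sin (η - θ) D(φ(k₂ ·)) = 0`. Since `D(φ(k₂ ·)) ≠ 0`, the
second one gives `|cos (θ - η)| = 1`, and then the first one gives `|D(φ(k₁ ·))| ≤ π`; but
`|D(φ(k₁ ·))| > π` as soon as `|k₁| > 1`.
-/

open Filter Set Topology Real InnerProductSpace

section InnerProduct

variable {E : Type*} [NormedAddCommGroup E] [InnerProductSpace ℝ E]

lemma inner_sub_norm_sq_smul_sub_nonneg (a b : E) :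
    0 ≤ ⟪a - b, ‖a‖ ^ 2 • a - ‖b‖ ^ 2 • b⟫_ℝ := by
  have h : ⟪a - b, ‖a‖ ^ 2 • a - ‖b‖ ^ 2 • b⟫_ℝ =
      ((‖a‖ ^ 2 - ‖b‖ ^ 2) ^ 2 + (‖a‖ ^ 2 + ‖b‖ ^ 2) * ‖a - b‖ ^ 2) / 2 := by
    rw [norm_sub_sq_real]
    simp only [inner_sub_left, inner_sub_right, real_inner_smul_right,
      real_inner_self_eq_norm_sq, real_inner_comm a b]
    ring
  rw [h]
  positivity

lemma norm_sq_le_gronwallBound {u u' : ℝ → E} {K δ a b : ℝ}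
    (hu : ∀ t ∈ Icc a b, HasDerivAt u (u' t) t)
    (hbound : ∀ t ∈ Ico a b, ⟪u t, u' t⟫_ℝ ≤ K * ‖u t‖ ^ 2 + δ) {t : ℝ} (ht : t ∈ Icc a b) :
    ‖u t‖ ^ 2 ≤ gronwallBound (‖u a‖ ^ 2) (2 * K) (2 * δ) (t - a) := by
  have hd (s : ℝ) (hs : s ∈ Icc a b) := (hu s hs).norm_sq
  refine le_gronwallBound_of_liminf_deriv_right_le (f := fun s => ‖u s‖ ^ 2)
    (fun s hs => (hd s hs).continuousAt.continuousWithinAt)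
    (fun s hs r hr => (hd s (Ico_subset_Icc_self hs)).hasDerivWithinAt.liminf_right_slope_le hr)
    le_rfl (fun s hs => ?_) t ht
  linarith [hbound s hs]

end InnerProduct

section Oscillator

/-- The vector field of the unforced oscillator, with the plane identified with `ℂ`: in the paper's
coordinates `z = x₂ + i x₁` (and `z = x₄ + i x₃`). -/
noncomputable def oscillatorField (z : ℂ) : ℂ := Complex.I * z + (1 - ‖z‖ ^ 2) • z

/-- `z` is a solution on all of `ℝ` of the oscillator with additive forcing `f`. -/
def IsForcedOscillation (f z : ℝ → ℂ) : Prop :=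
  ∀ t, HasDerivAt z (oscillatorField (z t) + f t) t

/-- The solution of the unforced oscillator that runs on the unit circle with phase `θ`. -/
noncomputable def limitCycle (θ t : ℝ) : ℂ := Complex.exp ((t + θ : ℝ) * Complex.I)

lemma norm_limitCycle (θ t : ℝ) : ‖limitCycle θ t‖ = 1 :=
  Complex.norm_exp_ofReal_mul_I _

lemma limitCycle_ne_zero (θ t : ℝ) : limitCycle θ t ≠ 0 :=
  Complex.exp_ne_zero _

lemma re_limitCycle (θ t : ℝ) : (limitCycle θ t).re = cos (t + θ) :=
  Complex.exp_ofReal_mul_I_re _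

lemma im_limitCycle (θ t : ℝ) : (limitCycle θ t).im = sin (t + θ) :=
  Complex.exp_ofReal_mul_I_im _

lemma im_ofReal_div_limitCycle (a θ t : ℝ) : (a / limitCycle θ t).im = -(a * sin (t + θ)) := by
  simp [Complex.div_im, Complex.normSq_eq_norm_sq, norm_limitCycle, im_limitCycle]

lemma periodic_limitCycle (θ : ℝ) : Function.Periodic (limitCycle θ) (2 * π) := fun t => by
  rw [limitCycle, limitCycle, ← Complex.exp_periodic (((t + θ : ℝ) : ℂ) * Complex.I)]
  congr 1
  push_cast
  ring

lemma hasDerivAt_limitCycle (θ t : ℝ) :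
    HasDerivAt (limitCycle θ) (Complex.I * limitCycle θ t) t := by
  have h := (((hasDerivAt_id t).add_const θ).ofReal_comp.mul_const Complex.I).cexp
  refine h.congr_deriv ?_
  rw [limitCycle, id, Complex.ofReal_one, one_mul, mul_comm]

lemma isForcedOscillation_limitCycle (θ : ℝ) : IsForcedOscillation 0 (limitCycle θ) := fun t => by
  simpa [oscillatorField, norm_limitCycle] using hasDerivAt_limitCycle θ t

lemma isForcedOscillation_of_hasDerivAt {ε : ℝ} {g x y : ℝ → ℝ}
    (hx : ∀ t, HasDerivAt x (y t - x t * (x t ^ 2 + y t ^ 2 - 1)) t)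
    (hy : ∀ t, HasDerivAt y (-x t - y t * (x t ^ 2 + y t ^ 2 - 1) + ε * g t) t) :
    IsForcedOscillation (fun t => ε • (g t : ℂ)) (fun t => y t + x t * Complex.I) := fun t => by
  refine ((hy t).ofReal_comp.add ((hx t).ofReal_comp.mul_const Complex.I)).congr_deriv ?_
  have hnorm : ‖(y t + x t * Complex.I : ℂ)‖ ^ 2 = y t ^ 2 + x t ^ 2 := by
    rw [← Complex.normSq_eq_norm_sq, Complex.normSq_add_mul_I]
  rw [oscillatorField, hnorm]
  apply Complex.ext <;> simp <;> ring

lemma inner_oscillatorField_sub_le (a b : ℂ) :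
    ⟪a - b, oscillatorField a - oscillatorField b⟫_ℝ ≤ ‖a - b‖ ^ 2 := by
  have hrot : ⟪a - b, Complex.I * (a - b)⟫_ℝ = 0 := by
    simp [Complex.inner]
    ring
  have hsplit : oscillatorField a - oscillatorField b =
      Complex.I * (a - b) + (a - b) - (‖a‖ ^ 2 • a - ‖b‖ ^ 2 • b) := by
    simp only [oscillatorField, sub_smul, one_smul]
    ring
  rw [hsplit, inner_sub_right, inner_add_right, hrot, real_inner_self_eq_norm_sq]
  linarith [inner_sub_norm_sq_smul_sub_nonneg a b]

lemma tendsto_integral_im_div_limitCycle {ι : Type*} {l : Filter ι} [l.IsCountablyGenerated]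
    {g z : ι → ℝ → ℂ} {G : ℝ → ℂ} {θ C a b : ℝ} (hgc : ∀ m, Continuous (g m))
    (hzc : ∀ m, Continuous (z m)) (hg : ∀ m t, ‖g m t‖ ≤ C)
    (hz : TendstoUniformlyOn z (limitCycle θ) l (uIcc a b))
    (hG : ∀ t ∈ uIcc a b, Tendsto (fun m => g m t) l (𝓝 (G t))) :
    Tendsto (fun m => ∫ t in a..b, (g m t / z m t).im) l
      (𝓝 (∫ t in a..b, (G t / limitCycle θ t).im)) := by
  have hsub : uIoc a b ⊆ uIcc a b := uIoc_subset_uIcc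
  refine intervalIntegral.tendsto_integral_filter_of_dominated_convergence (fun _ => C / (1 / 2))
    (.of_forall fun m => ?_) ?_ (by simp) (.of_forall fun t ht => ?_)
  · have hgm := (hgc m).measurable
    have hzm := (hzc m).measurable
    exact (Complex.measurable_im.comp (hgm.div hzm)).aestronglyMeasurable
  · filter_upwards [Metric.tendstoUniformlyOn_iff.mp hz (1 / 2) one_half_pos] with m hm
    refine .of_forall fun t ht => (Complex.abs_im_le_norm _).trans ?_
    have hz_ge : 1 / 2 ≤ ‖z m t‖ := by
      have hdist := hm t (hsub ht)
      rw [dist_eq_norm] at hdist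
      linarith [norm_limitCycle θ t, norm_sub_norm_le (limitCycle θ t) (z m t)]
    rw [norm_div]
    exact div_le_div₀ ((norm_nonneg _).trans (hg m t)) (hg m t) one_half_pos hz_ge
  · exact (Complex.continuous_im.tendsto _).comp
      ((hG t (hsub ht)).div (hz.tendsto_at (hsub ht)) (limitCycle_ne_zero θ t))

namespace IsForcedOscillation

lemma continuous {f z : ℝ → ℂ} (hz : IsForcedOscillation f z) : Continuous z :=
  continuous_iff_continuousAt.mpr fun t => (hz t).continuousAt

/-- The oscillator field is one-sided Lipschitz on the whole plane, so no a priori bound on the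
solutions is needed. -/
lemma norm_sub_sq_le_gronwallBound {f₁ f₂ z₁ z₂ : ℝ → ℂ} {δ a b : ℝ}
    (hz₁ : IsForcedOscillation f₁ z₁) (hz₂ : IsForcedOscillation f₂ z₂)
    (hf : ∀ t ∈ Ico a b, ‖f₁ t - f₂ t‖ ≤ δ) {t : ℝ} (ht : t ∈ Icc a b) :
    ‖z₁ t - z₂ t‖ ^ 2 ≤ gronwallBound (‖z₁ a - z₂ a‖ ^ 2) 3 (δ ^ 2) (t - a) := by
  have hbound (s : ℝ) (hs : s ∈ Ico a b) :
      ⟪z₁ s - z₂ s, oscillatorField (z₁ s) + f₁ s - (oscillatorField (z₂ s) + f₂ s)⟫_ℝ ≤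
        3 / 2 * ‖z₁ s - z₂ s‖ ^ 2 + δ ^ 2 / 2 := by
    have hforce : ⟪z₁ s - z₂ s, f₁ s - f₂ s⟫_ℝ ≤ ‖z₁ s - z₂ s‖ * δ :=
      (real_inner_le_norm _ _).trans (mul_le_mul_of_nonneg_left (hf s hs) (norm_nonneg _))
    rw [add_sub_add_comm, inner_add_right]
    linarith [inner_oscillatorField_sub_le (z₁ s) (z₂ s), two_mul_le_add_sq ‖z₁ s - z₂ s‖ δ]
  have h := norm_sq_le_gronwallBound (fun s _ => (hz₁ s).sub (hz₂ s)) hbound ht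
  simpa [mul_div_cancel₀] using h

lemma tendstoUniformlyOn {ι : Type*} {l : Filter ι} {f z : ι → ℝ → ℂ} {f₀ z₀ : ℝ → ℂ} {δ : ι → ℝ}
    {a b : ℝ} (hz : ∀ m, IsForcedOscillation (f m) (z m)) (hz₀ : IsForcedOscillation f₀ z₀)
    (hf : ∀ m, ∀ t ∈ Ico a b, ‖f m t - f₀ t‖ ≤ δ m) (hδ : Tendsto δ l (𝓝 0))
    (ha : Tendsto (fun m => z m a) l (𝓝 (z₀ a))) : TendstoUniformlyOn z z₀ l (Icc a b) := by
  have hlim : Tendsto (fun m => gronwallBound (‖z m a - z₀ a‖ ^ 2) 3 (δ m ^ 2) (b - a)) l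
      (𝓝 0) := by
    have hinit := ((tendsto_iff_norm_sub_tendsto_zero.mp ha).pow 2).mul_const (exp (3 * (b - a)))
    have hforce := ((hδ.pow 2).div_const 3).mul_const (exp (3 * (b - a)) - 1)
    simpa [gronwallBound_of_K_ne_0] using hinit.add hforce
  rw [Metric.tendstoUniformlyOn_iff]
  intro r hr
  filter_upwards [hlim.eventually_lt_const (sq_pos_of_pos hr)] with m hm t ht
  rw [dist_comm, dist_eq_norm]
  refine lt_of_pow_lt_pow_left₀ 2 hr.le (lt_of_le_of_lt ?_ hm)
  exact ((hz m).norm_sub_sq_le_gronwallBound hz₀ (hf m) ht).trans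
    (gronwallBound_mono (sq_nonneg _) (sq_nonneg _) zero_le_three (by linarith [ht.2]))

lemma tendstoUniformlyOn_limitCycle {ι : Type*} {l : Filter ι} {ε : ι → ℝ} {g z : ι → ℝ → ℂ}
    {θ C b : ℝ} (hz : ∀ m, IsForcedOscillation (fun t => ε m • g m t) (z m))
    (hg : ∀ m t, ‖g m t‖ ≤ C) (hε : Tendsto ε l (𝓝 0))
    (h0 : Tendsto (fun m => z m 0) l (𝓝 (limitCycle θ 0))) :
    TendstoUniformlyOn z (limitCycle θ) l (Icc 0 b) := by
  refine tendstoUniformlyOn (δ := fun m => |ε m| * C) hz (isForcedOscillation_limitCycle θ)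
    (fun m t _ => ?_) (by simpa using hε.abs.mul_const C) h0
  rw [Pi.zero_apply, sub_zero, norm_smul, norm_eq_abs]
  exact mul_le_mul_of_nonneg_left (hg m t) (abs_nonneg _)

lemma hasDerivAt_div_limitCycle {f z : ℝ → ℂ} (hz : IsForcedOscillation f z) (θ t : ℝ) :
    HasDerivAt (fun s => z s / limitCycle θ s)
      (((1 - ‖z t‖ ^ 2) • z t + f t) / limitCycle θ t) t := by
  have hc := limitCycle_ne_zero θ t
  refine ((hz t).div (hasDerivAt_limitCycle θ t) hc).congr_deriv ?_
  rw [oscillatorField]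
  field_simp
  ring

/-- In the frame rotating with the limit cycle, only the forcing changes the argument of `z`, and
the total change over a period vanishes. -/
lemma integral_im_forcing_div_eq_zero {f z : ℝ → ℂ} {θ : ℝ} (hz : IsForcedOscillation f z)
    (hf : Continuous f) (hper : Function.Periodic z (2 * π))
    (hclose : ∀ t ∈ Icc 0 (2 * π), ‖z t - limitCycle θ t‖ < 1) :
    ∫ t in (0 : ℝ)..2 * π, (f t / z t).im = 0 := by
  have hslit (t : ℝ) (ht : t ∈ Icc 0 (2 * π)) : z t / limitCycle θ t ∈ Complex.slitPlane := by
    have hnorm : ‖z t / limitCycle θ t - 1‖ < 1 := by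
      rw [div_sub_one (limitCycle_ne_zero θ t), norm_div, norm_limitCycle, div_one]
      exact hclose t ht
    simpa using Complex.mem_slitPlane_of_norm_lt_one hnorm
  have hne (t : ℝ) (ht : t ∈ Icc 0 (2 * π)) : z t ≠ 0 := fun h0 =>
    Complex.slitPlane_ne_zero (hslit t ht) (by rw [h0, zero_div])
  have hIcc : uIcc 0 (2 * π) = Icc 0 (2 * π) := uIcc_of_le two_pi_pos.le
  have harg (t : ℝ) (ht : t ∈ uIcc 0 (2 * π)) :
      HasDerivAt (fun s => (Complex.log (z s / limitCycle θ s)).im) (f t / z t).im t := by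
    rw [hIcc] at ht
    have hlog := (hz.hasDerivAt_div_limitCycle θ t).clog_real (hslit t ht)
    rw [div_div_div_cancel_right₀ (limitCycle_ne_zero θ t), add_div, Complex.real_smul,
      mul_div_cancel_right₀ _ (hne t ht)] at hlog
    refine (Complex.imCLM.hasFDerivAt.comp_hasDerivAt t hlog).congr_deriv ?_
    rw [Complex.imCLM_apply, Complex.add_im, Complex.ofReal_im, zero_add]
  have hint : IntervalIntegrable (fun t => (f t / z t).im) MeasureTheory.volume 0 (2 * π) := by
    refine ContinuousOn.intervalIntegrable (Complex.continuous_im.comp_continuousOn ?_)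
    rw [hIcc]
    exact hf.continuousOn.div hz.continuous.continuousOn hne
  rw [intervalIntegral.integral_eq_sub_of_hasDerivAt harg hint, hper.eq,
    (periodic_limitCycle θ).eq, sub_self]

/-- Malkin's bifurcation equation: the integrand is the component of the limit forcing
in the phase direction of the cycle. -/
lemma integral_im_limit_forcing_div_eq_zero {ι : Type*} {l : Filter ι} [l.NeBot]
    [l.IsCountablyGenerated] {ε : ι → ℝ} {g z : ι → ℝ → ℂ} {G : ℝ → ℂ} {θ C : ℝ}
    (hz : ∀ m, IsForcedOscillation (fun t => ε m • g m t) (z m))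
    (hper : ∀ m, Function.Periodic (z m) (2 * π)) (hgc : ∀ m, Continuous (g m))
    (hg : ∀ m t, ‖g m t‖ ≤ C) (hε₀ : ∀ m, ε m ≠ 0) (hε : Tendsto ε l (𝓝 0))
    (h0 : Tendsto (fun m => z m 0) l (𝓝 (limitCycle θ 0)))
    (hG : ∀ t ∈ Icc 0 (2 * π), Tendsto (fun m => g m t) l (𝓝 (G t))) :
    ∫ t in (0 : ℝ)..2 * π, (G t / limitCycle θ t).im = 0 := by
  have hunif := tendstoUniformlyOn_limitCycle (b := 2 * π) hz hg hε h0
  have hzero : ∀ᶠ m in l, ∫ t in (0 : ℝ)..2 * π, (g m t / z m t).im = 0 := by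
    filter_upwards [Metric.tendstoUniformlyOn_iff.mp hunif 1 one_pos] with m hm
    have h := (hz m).integral_im_forcing_div_eq_zero ((hgc m).const_smul (ε m)) (hper m)
      fun t ht => by simpa only [dist_comm, dist_eq_norm] using hm t ht
    simp only [smul_div_assoc, Complex.smul_im, smul_eq_mul,
      intervalIntegral.integral_const_mul] at h
    exact (mul_eq_zero.mp h).resolve_left (hε₀ m)
  rw [← uIcc_of_le two_pi_pos.le] at hunif hG
  exact tendsto_nhds_unique
    (tendsto_integral_im_div_limitCycle hgc (fun m => (hz m).continuous) hg hunif hG)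
    (tendsto_const_nhds.congr' (hzero.mono fun m hm => hm.symm))

lemma integral_limit_forcing_mul_sin_eq_zero {ι : Type*} {l : Filter ι} [l.NeBot]
    [l.IsCountablyGenerated] {ε : ι → ℝ} {g : ι → ℝ → ℝ} {z : ι → ℝ → ℂ} {G : ℝ → ℝ} {θ C : ℝ}
    (hz : ∀ m, IsForcedOscillation (fun t => ε m • (g m t : ℂ)) (z m))
    (hper : ∀ m, Function.Periodic (z m) (2 * π)) (hgc : ∀ m, Continuous (g m))
    (hg : ∀ m t, |g m t| ≤ C) (hε₀ : ∀ m, ε m ≠ 0) (hε : Tendsto ε l (𝓝 0))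
    (h0 : Tendsto (fun m => z m 0) l (𝓝 (limitCycle θ 0)))
    (hG : ∀ t ∈ Icc 0 (2 * π), Tendsto (fun m => g m t) l (𝓝 (G t))) :
    ∫ t in (0 : ℝ)..2 * π, G t * sin (t + θ) = 0 := by
  have h := integral_im_limit_forcing_div_eq_zero (C := C)
    (G := fun t => (G t : ℂ)) hz hper (fun m => Complex.continuous_ofReal.comp (hgc m))
    (fun m t => (Complex.norm_real _).trans_le (hg m t)) hε₀ hε h0
    fun t ht => (Complex.continuous_ofReal.tendsto _).comp (hG t ht)
  simpa [im_ofReal_div_limitCycle] using h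

end IsForcedOscillation

end Oscillator

section FirstHarmonic

/-- The first cosine coefficient, up to the factor `1 / π`, of the response of the nonlinearity `f`
to the input `cos` (its describing function at unit amplitude). -/
noncomputable def firstHarmonic (f : ℝ → ℝ) : ℝ := ∫ t in (0 : ℝ)..2 * π, f (cos t) * cos t

lemma integral_comp_add_of_periodic {f : ℝ → ℝ} {T : ℝ} (hf : Function.Periodic f T) (a : ℝ) :
    ∫ t in (0 : ℝ)..T, f (t + a) = ∫ t in (0 : ℝ)..T, f t := by
  simpa [add_comm T] using hf.intervalIntegral_add_eq a 0

lemma integral_comp_cos_mul_sin {f : ℝ → ℝ} (hf : Continuous f) :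
    ∫ t in (0 : ℝ)..2 * π, f (cos t) * sin t = 0 := by
  have h := intervalIntegral.integral_comp_mul_deriv (a := 0) (b := 2 * π)
    (fun t _ => hasDerivAt_cos t) (by fun_prop) hf
  simpa using h

lemma integral_comp_cos_add_mul_sin_add {f : ℝ → ℝ} (hf : Continuous f) (α β : ℝ) :
    ∫ t in (0 : ℝ)..2 * π, f (cos (t + α)) * sin (t + β) = sin (β - α) * firstHarmonic f := by
  have hper : Function.Periodic (fun t => f (cos t) * sin (t + (β - α))) (2 * π) := fun t => by
    simp only [cos_add_two_pi, add_right_comm t, sin_add_two_pi]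
  calc ∫ t in (0 : ℝ)..2 * π, f (cos (t + α)) * sin (t + β)
    _ = ∫ t in (0 : ℝ)..2 * π, f (cos t) * sin (t + (β - α)) := by
      rw [← integral_comp_add_of_periodic hper α]
      simp only [add_add_sub_cancel]
    _ = ∫ t in (0 : ℝ)..2 * π,
          (cos (β - α) * (f (cos t) * sin t) + sin (β - α) * (f (cos t) * cos t)) := by
      congr! 2 with t
      rw [sin_add]
      ring
    _ = sin (β - α) * firstHarmonic f := by
      rw [intervalIntegral.integral_add (Continuous.intervalIntegrable (by fun_prop) _ _)
        (Continuous.intervalIntegrable (by fun_prop) _ _), intervalIntegral.integral_const_mul,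
        intervalIntegral.integral_const_mul, integral_comp_cos_mul_sin hf, mul_zero, zero_add,
        firstHarmonic]

lemma integral_comp_sin_add_mul_sin_add {f : ℝ → ℝ} (hf : Continuous f) (α β : ℝ) :
    ∫ t in (0 : ℝ)..2 * π, f (sin (t + α)) * sin (t + β) = cos (β - α) * firstHarmonic f := by
  have h := integral_comp_cos_add_mul_sin_add hf (α - π / 2) β
  simpa only [← add_sub_assoc, cos_sub_pi_div_two, sub_sub_eq_add_sub, add_sub_right_comm β,
    sin_add_pi_div_two] using h

lemma firstHarmonic_id : firstHarmonic id = π := by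
  have h := integral_cos_sq (a := 0) (b := 2 * π)
  simp only [sq] at h
  simpa [firstHarmonic] using h

lemma firstHarmonic_neg (f : ℝ → ℝ) : firstHarmonic (-f) = -firstHarmonic f := by
  simp [firstHarmonic]

lemma firstHarmonic_smul (c : ℝ) (f : ℝ → ℝ) : firstHarmonic (c • f) = c * firstHarmonic f := by
  simp [firstHarmonic, mul_assoc]

lemma firstHarmonic_sub {f g : ℝ → ℝ} (hf : Continuous f) (hg : Continuous g) :
    firstHarmonic (f - g) = firstHarmonic f - firstHarmonic g := by
  simp only [firstHarmonic, Pi.sub_apply, sub_mul]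
  exact intervalIntegral.integral_sub (Continuous.intervalIntegrable (by fun_prop) _ _)
    (Continuous.intervalIntegrable (by fun_prop) _ _)

lemma firstHarmonic_pos {f : ℝ → ℝ} (hf : Continuous f) (hnonneg : ∀ x, |x| ≤ 1 → 0 ≤ f x * x)
    (hpos : ∃ x, |x| ≤ 1 ∧ 0 < f x * x) : 0 < firstHarmonic f := by
  obtain ⟨x, hx, hfx⟩ := hpos
  refine intervalIntegral.integral_pos two_pi_pos (by fun_prop)
    (fun t _ => hnonneg _ (abs_cos_le_one t))
    ⟨arccos x, ⟨arccos_nonneg x, by linarith [arccos_le_pi x, pi_pos]⟩, ?_⟩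
  rwa [cos_arccos (abs_le.mp hx).1 (abs_le.mp hx).2]

end FirstHarmonic

section Saturation

lemma sat_eq_max_min (x : ℝ) : sat x = max (-1) (min x 1) := by
  unfold sat
  split_ifs with h₁ h₂
  · rw [min_eq_left (by linarith), max_eq_left h₁.le]
  · rw [min_eq_left h₂, max_eq_right (by linarith)]
  · rw [min_eq_right (by linarith), max_eq_right (by norm_num)]

@[fun_prop]
lemma continuous_sat : Continuous sat := by
  rw [funext sat_eq_max_min]
  fun_prop

lemma abs_sat_le_one (x : ℝ) : |sat x| ≤ 1 := by
  unfold sat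
  split_ifs <;> rw [abs_le] <;> constructor <;> linarith

lemma sat_neg (x : ℝ) : sat (-x) = -sat x := by
  unfold sat
  split_ifs <;> linarith

lemma sat_mul_self_pos {x : ℝ} (hx : x ≠ 0) : 0 < sat x * x := by
  unfold sat
  split_ifs
  · linarith
  · exact mul_self_pos.mpr hx
  · linarith

lemma sq_le_sat_mul_mul {k x : ℝ} (hk : 1 ≤ k) (hx : |x| ≤ 1) : x ^ 2 ≤ sat (k * x) * x := by
  obtain ⟨hx₁, hx₂⟩ := abs_le.mp hx
  unfold sat
  split_ifs
  · nlinarith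
  · nlinarith [sq_nonneg x]
  · nlinarith

lemma firstHarmonic_sat_mul_ne_zero {k : ℝ} (hk : k ≠ 0) :
    firstHarmonic (fun x => sat (k * x)) ≠ 0 := by
  have hmul (x : ℝ) : (k • fun x => sat (k * x)) x * x = sat (k * x) * (k * x) := by
    simp only [Pi.smul_apply, smul_eq_mul]
    ring
  have hpos : 0 < firstHarmonic (k • fun x => sat (k * x)) := by
    refine firstHarmonic_pos (by fun_prop)
      (fun x _ => ?_) ⟨1, by simp, ?_⟩
    · rw [hmul]
      rcases eq_or_ne (k * x) 0 with h | h
      · simp [h]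
      · exact (sat_mul_self_pos h).le
    · rw [hmul]
      exact sat_mul_self_pos (by simpa using hk)
  rw [firstHarmonic_smul] at hpos
  exact right_ne_zero_of_mul hpos.ne'

lemma pi_lt_firstHarmonic_sat_mul {k : ℝ} (hk : 1 < k) :
    π < firstHarmonic (fun x => sat (k * x)) := by
  have hsat : Continuous fun x => sat (k * x) := by fun_prop
  have hpos : 0 < firstHarmonic ((fun x => sat (k * x)) - id) := by
    refine firstHarmonic_pos (hsat.sub continuous_id) (fun x hx => ?_) ⟨1 / 2, ?_, ?_⟩
    · simp only [Pi.sub_apply, id]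
      linarith [sq_le_sat_mul_mul hk.le hx]
    · norm_num [abs_le]
    · simp only [Pi.sub_apply, id, sat]
      split_ifs <;> linarith
  rw [firstHarmonic_sub hsat continuous_id, firstHarmonic_id] at hpos
  linarith

lemma pi_lt_abs_firstHarmonic_sat_mul {k : ℝ} (hk : 1 < |k|) :
    π < |firstHarmonic (fun x => sat (k * x))| := by
  rcases lt_abs.mp hk with h | h
  · exact (pi_lt_firstHarmonic_sat_mul h).trans_le (le_abs_self _)
  · have hodd : (fun x => sat (-k * x)) = -fun x => sat (k * x) := by
      ext x
      rw [neg_mul, sat_neg, Pi.neg_apply]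
    have hneg := pi_lt_firstHarmonic_sat_mul h
    rw [hodd, firstHarmonic_neg] at hneg
    exact hneg.trans_le (neg_le_abs _)

end Saturation

section CoupledOscillators

/-- `(z₁, z₂)` is a `2π`-periodic solution of the coupled system in complex coordinates, with
general nonlinearities: `f₁ x = φ(k₁ x)` and `f₂ x = φ(k₂ x)` give the system (S_ε). -/
structure IsPeriodicCoupledOscillation (f₁ f₂ : ℝ → ℝ) (ε : ℝ) (z₁ z₂ : ℝ → ℂ) : Prop where
  forced_fst : IsForcedOscillation (fun t => ε • ((sin t + f₁ (z₂ t).im : ℝ) : ℂ)) z₁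
  forced_snd : IsForcedOscillation (fun t => ε • (f₂ (z₁ t).re : ℂ)) z₂
  periodic_fst : Function.Periodic z₁ (2 * π)
  periodic_snd : Function.Periodic z₂ (2 * π)

namespace IsPeriodicCoupledOscillation

variable {ι : Type*} {l : Filter ι} [l.NeBot] [l.IsCountablyGenerated] {f₁ f₂ : ℝ → ℝ}
  {C₁ C₂ θ η : ℝ} {ε : ι → ℝ} {z₁ z₂ : ι → ℝ → ℂ}

lemma bifurcation_equations (h : ∀ m, IsPeriodicCoupledOscillation f₁ f₂ (ε m) (z₁ m) (z₂ m))
    (hf₁ : Continuous f₁) (hf₂ : Continuous f₂) (hC₁ : ∀ x, |f₁ x| ≤ C₁) (hC₂ : ∀ x, |f₂ x| ≤ C₂)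
    (hε₀ : ∀ m, ε m ≠ 0) (hε : Tendsto ε l (𝓝 0))
    (h₁ : Tendsto (fun m => z₁ m 0) l (𝓝 (limitCycle θ 0)))
    (h₂ : Tendsto (fun m => z₂ m 0) l (𝓝 (limitCycle η 0))) :
    cos θ * π + cos (θ - η) * firstHarmonic f₁ = 0 ∧ sin (η - θ) * firstHarmonic f₂ = 0 := by
  have hg₁ (m : ι) (t : ℝ) : |sin t + f₁ (z₂ m t).im| ≤ 1 + C₁ :=
    (abs_add_le _ _).trans (add_le_add (abs_sin_le_one t) (hC₁ _))
  have hu₁ := IsForcedOscillation.tendstoUniformlyOn_limitCycle (b := 2 * π)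
    (fun m => (h m).forced_fst) (fun m t => (Complex.norm_real _).trans_le (hg₁ m t)) hε h₁
  have hu₂ := IsForcedOscillation.tendstoUniformlyOn_limitCycle (b := 2 * π)
    (fun m => (h m).forced_snd) (fun m t => (Complex.norm_real _).trans_le (hC₂ _)) hε h₂
  have hre (t : ℝ) (ht : t ∈ Icc 0 (2 * π)) :
      Tendsto (fun m => (z₁ m t).re) l (𝓝 (cos (t + θ))) := by
    rw [← re_limitCycle]
    exact (Complex.continuous_re.tendsto _).comp (hu₁.tendsto_at ht)
  have him (t : ℝ) (ht : t ∈ Icc 0 (2 * π)) :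
      Tendsto (fun m => (z₂ m t).im) l (𝓝 (sin (t + η))) := by
    rw [← im_limitCycle]
    exact (Complex.continuous_im.tendsto _).comp (hu₂.tendsto_at ht)
  constructor
  · have hI := IsForcedOscillation.integral_limit_forcing_mul_sin_eq_zero
      (fun m => (h m).forced_fst) (fun m => (h m).periodic_fst)
      (fun m => continuous_sin.add
        (hf₁.comp (Complex.continuous_im.comp (h m).forced_snd.continuous)))
      hg₁ hε₀ hε h₁ fun t ht => ((hf₁.tendsto _).comp (him t ht)).const_add (sin t)
    have hsin : ∫ t in (0 : ℝ)..2 * π, sin t * sin (t + θ) = cos θ * π := by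
      simpa [firstHarmonic_id] using integral_comp_sin_add_mul_sin_add continuous_id 0 θ
    simp only [add_mul] at hI
    rwa [intervalIntegral.integral_add (Continuous.intervalIntegrable (by fun_prop) _ _)
      (Continuous.intervalIntegrable (by fun_prop) _ _), hsin,
      integral_comp_sin_add_mul_sin_add hf₁] at hI
  · rw [← integral_comp_cos_add_mul_sin_add hf₂]
    exact IsForcedOscillation.integral_limit_forcing_mul_sin_eq_zero
      (fun m => (h m).forced_snd) (fun m => (h m).periodic_snd)
      (fun m => hf₂.comp (Complex.continuous_re.comp (h m).forced_fst.continuous))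
      (fun m t => hC₂ _) hε₀ hε h₂ fun t ht => (hf₂.tendsto _).comp (hre t ht)

lemma not_tendsto_limitCycle
    (h : ∀ m, IsPeriodicCoupledOscillation f₁ f₂ (ε m) (z₁ m) (z₂ m))
    (hf₁ : Continuous f₁) (hf₂ : Continuous f₂) (hC₁ : ∀ x, |f₁ x| ≤ C₁) (hC₂ : ∀ x, |f₂ x| ≤ C₂)
    (hε₀ : ∀ m, ε m ≠ 0) (hε : Tendsto ε l (𝓝 0))
    (hD₁ : π < |firstHarmonic f₁|) (hD₂ : firstHarmonic f₂ ≠ 0)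
    (h₁ : Tendsto (fun m => z₁ m 0) l (𝓝 (limitCycle θ 0))) :
    ¬ Tendsto (fun m => z₂ m 0) l (𝓝 (limitCycle η 0)) := by
  intro h₂
  obtain ⟨heq₁, heq₂⟩ := bifurcation_equations h hf₁ hf₂ hC₁ hC₂ hε₀ hε h₁ h₂
  have hsin : sin (η - θ) = 0 := (mul_eq_zero.mp heq₂).resolve_right hD₂
  have hcos : |cos (θ - η)| = 1 := by
    rw [← neg_sub η θ, cos_neg, abs_cos_eq_sqrt_one_sub_sin_sq, hsin]
    simp
  have hle : |firstHarmonic f₁| ≤ π := calc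
    |firstHarmonic f₁| = |cos (θ - η) * firstHarmonic f₁| := by rw [abs_mul, hcos, one_mul]
    _ = |cos θ| * π := by
      rw [eq_neg_of_add_eq_zero_right heq₁, abs_neg, abs_mul, abs_of_pos pi_pos]
    _ ≤ π := mul_le_of_le_one_left pi_pos.le (abs_cos_le_one θ)
  exact hD₁.not_ge hle

end IsPeriodicCoupledOscillation

lemma isPeriodicCoupledOscillation_of_hasDerivAt_sysF {k₁ k₂ ε : ℝ} {φ : ℝ → Fin 4 → ℝ}
    (hsol : ∀ t, HasDerivAt φ (sysF k₁ k₂ ε t (φ t)) t) (hper : Function.Periodic φ (2 * π)) :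
    IsPeriodicCoupledOscillation (fun x => sat (k₁ * x)) (fun x => sat (k₂ * x)) ε
      (fun t => φ t 1 + φ t 0 * Complex.I) (fun t => φ t 3 + φ t 2 * Complex.I) := by
  have hd (t : ℝ) := hasDerivAt_pi.mp (hsol t)
  exact
    { forced_fst := by
        simpa using isForcedOscillation_of_hasDerivAt (g := fun t => sin t + sat (k₁ * φ t 2))
          (fun t => hd t 0) (fun t => hd t 1)
      forced_snd := by
        simpa using isForcedOscillation_of_hasDerivAt (g := fun t => sat (k₂ * φ t 1))
          (fun t => hd t 2) (fun t => hd t 3)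
      periodic_fst := fun t => by simp only [hper t]
      periodic_snd := fun t => by simp only [hper t] }

end CoupledOscillators

theorem stmt16_general {k₁ k₂ : ℝ} (hk₂ : k₂ ≠ 0) (hk₁ : 1 < |k₁|) {ι : Type*} {l : Filter ι}
    [l.NeBot] [l.IsCountablyGenerated] {ε : ι → ℝ} (hε₀ : ∀ m, ε m ≠ 0) (hε : Tendsto ε l (𝓝 0))
    {φ : ι → ℝ → Fin 4 → ℝ} (hφsol : ∀ m t, HasDerivAt (φ m) (sysF k₁ k₂ (ε m) t (φ m t)) t)
    (hφper : ∀ m, Function.Periodic (φ m) (2 * π)) (θ η : ℝ) :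
    ¬ Tendsto (fun m => φ m 0) l (𝓝 (xiPt θ η)) := by
  intro hlim
  have hl := tendsto_pi_nhds.mp hlim
  have hpair {i j : Fin 4} {α : ℝ} (hi : Tendsto (fun m => φ m 0 i) l (𝓝 (cos α)))
      (hj : Tendsto (fun m => φ m 0 j) l (𝓝 (sin α))) :
      Tendsto (fun m => (φ m 0 i + φ m 0 j * Complex.I : ℂ)) l (𝓝 (limitCycle α 0)) := by
    simpa [limitCycle, Complex.exp_mul_I] using
      hi.ofReal.add (hj.ofReal.mul_const Complex.I)
  exact IsPeriodicCoupledOscillation.not_tendsto_limitCycle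
    (fun m => isPeriodicCoupledOscillation_of_hasDerivAt_sysF (hφsol m) (hφper m))
    (by fun_prop) (by fun_prop) (fun _ => abs_sat_le_one _) (fun _ => abs_sat_le_one _) hε₀ hε
    (pi_lt_abs_firstHarmonic_sat_mul hk₁) (firstHarmonic_sat_mul_ne_zero hk₂)
    (hpair (hl 1) (hl 0)) (hpair (hl 3) (hl 2))

theorem stmt16
    (k₁ k₂ : ℝ) (hk₂ : k₂ ≠ 0) (hk₁ : 1 < |k₁|)
    (ε : ℕ → ℝ) (hε : ∀ m, ε m ∈ Set.Ioc (0 : ℝ) 1)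
    (hεlim : Filter.Tendsto ε Filter.atTop (nhds 0))
    (φ : ℕ → ℝ → (Fin 4 → ℝ))
    (hφsol : ∀ m : ℕ, ∀ t : ℝ, HasDerivAt (φ m) (sysF k₁ k₂ (ε m) t (φ m t)) t)
    (hφper : ∀ m : ℕ, ∀ t : ℝ, φ m (t + 2 * Real.pi) = φ m t) :
    ∀ θ η : ℝ, ¬ Filter.Tendsto (fun m => φ m 0) Filter.atTop (nhds (xiPt θ η)) :=
  stmt16_general hk₂ hk₁ (fun m => (hε m).1.ne') hεlim hφsol hφper
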